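/- Let G = PSL(2,ℂ) and H = π(SL(2,ℝ)). Let Γ be a discrete subgroup of G with Γ\G compact such that Γ ∩ H is cocompact in H (i.e. there is a compact subset K ⊆ H with H = (Γ∩H)·K). Let 𝒩 denote the normalizer of H in G and let D ⊆ V be a compact subset. Let g ∈ G with g ∉ Γ𝒩V = {γnv : γ ∈ Γ, n ∈ 𝒩, v ∈ V}, and set x = Γg ∈ Γ\G. Then for every ε > 0 there exists an open subset Ω of Γ\G containing {Γ(nd) : n ∈ 𝒩, d ∈ D} such that for every T > 0 the Lebesgue measure of {t ∈ [0, T] : x·u_t ∈ Ω} is at most εT. -/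

import Mathlib

open scoped MatrixGroups
open Matrix Filter

noncomputable section

/-- `SL(2,ℂ)`. -/
abbrev SL2C := Matrix.SpecialLinearGroup (Fin 2) ℂ

instance : TopologicalSpace SL2C := instTopologicalSpaceSubtype

/-- `G = PSL(2,ℂ) = SL(2,ℂ)/{±I}`, with the quotient topology. -/
abbrev PSL2C := Matrix.ProjectiveSpecialLinearGroup (Fin 2) ℂ

/-- The projection `π : SL(2,ℂ) → PSL(2,ℂ)`. -/
def pr : SL2C →* PSL2C := QuotientGroup.mk' _

/-- The upper triangular unipotent matrix `[[1, t],[0, 1]]` as an element of `SL(2,ℂ)`. -/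
def uMat (t : ℂ) : SL2C := ⟨!![1, t; 0, 1], by simp [Matrix.det_fin_two_of]⟩

/-- `u_t = π [[1, t],[0, 1]]` for `t ∈ ℝ`. -/
def uu (t : ℝ) : PSL2C := pr (uMat t)

/-- `v_s = π [[1, is],[0, 1]]` for `s ∈ ℝ`. -/
def vv (s : ℝ) : PSL2C := pr (uMat (s * Complex.I))

/-- The subgroup `U = {u_t : t ∈ ℝ}` as a subset of `PSL(2,ℂ)`. -/
def Uset : Set PSL2C := Set.range uu

/-- The subgroup `V = {v_s : s ∈ ℝ}` as a subset of `PSL(2,ℂ)`. -/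
def Vset : Set PSL2C := Set.range vv

/-- The subgroup `N = {π [[1, z],[0,1]] : z ∈ ℂ}` as a subset of `PSL(2,ℂ)`. -/
def Nset : Set PSL2C := {x | ∃ z : ℂ, x = pr (uMat z)}

/-- `H = π (SL(2,ℝ))`, the image in `PSL(2,ℂ)` of the real matrices. -/
def Hset : Set PSL2C :=
  {x | ∃ g : Matrix.SpecialLinearGroup (Fin 2) ℝ,
    x = pr (Matrix.SpecialLinearGroup.map (algebraMap ℝ ℂ) g)}

/-- The upper triangular matrix `[[a, z],[0, a⁻¹]]` as an element of `SL(2,ℂ)`,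
for a nonzero real `a`. -/
def tri (a : ℝ) (ha : a ≠ 0) (z : ℂ) : SL2C :=
  ⟨!![(a : ℂ), z; 0, (a : ℂ)⁻¹], by
    have h : (a : ℂ) ≠ 0 := by exact_mod_cast ha
    simp [Matrix.det_fin_two_of, mul_inv_cancel₀ h]⟩

/-- `AN = {π [[a, z],[0, a⁻¹]] : a > 0 real, z ∈ ℂ}`. -/
def ANset : Set PSL2C := {x | ∃ (a : ℝ) (ha : 0 < a) (z : ℂ), x = pr (tri a ha.ne' z)}

/-- `AV = {π [[a, ib],[0, a⁻¹]] : a > 0 real, b ∈ ℝ}`. -/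
def AVset : Set PSL2C :=
  {x | ∃ (a : ℝ) (ha : 0 < a) (b : ℝ), x = pr (tri a ha.ne' (b * Complex.I))}

/-- `A = {π diag(a, a⁻¹) : a > 0 real}`. -/
def Aset : Set PSL2C := {x | ∃ (a : ℝ) (ha : 0 < a), x = pr (tri a ha.ne' 0)}

variable (Γ : Subgroup PSL2C)

/-- The space `Γ\\G` of right cosets `Γg`, with the quotient topology. -/
abbrev XΓ := Quotient (QuotientGroup.rightRel Γ)

/-- The natural projection `G → Γ\\G`. -/
def mkX (g : PSL2C) : XΓ Γ := Quotient.mk'' g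

/-- The right translation action of `G` on `Γ\\G`: `(Γg₀)·g = Γ(g₀g)`. -/
def act (x : XΓ Γ) (g : PSL2C) : XΓ Γ :=
  Quotient.map' (fun h => h * g)
    (fun a b hab => by
      rw [QuotientGroup.rightRel_apply] at hab ⊢
      simpa [_root_.mul_inv_rev, mul_assoc] using hab) x

/-- The orbit `xS = {x·s : s ∈ S}` of a point `x ∈ Γ\\G` under a subset `S ⊆ G`. -/
def orb (x : XΓ Γ) (S : Set PSL2C) : Set (XΓ Γ) := (fun s => act Γ x s) '' S

/-- `Γ` is a lattice in `G`: there is a nonzero finite Borel measure on `Γ\\G`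
invariant under the right translation action of `G`. -/
def IsLattice : Prop :=
  letI : MeasurableSpace (XΓ Γ) := borel _
  ∃ μ : MeasureTheory.Measure (XΓ Γ), μ ≠ 0 ∧ MeasureTheory.IsFiniteMeasure μ ∧
    ∀ g : PSL2C, MeasureTheory.Measure.map (fun x => act Γ x g) μ = μ


/-- The normalizer `𝒩 = {g ∈ G : gHg⁻¹ = H}` of `H` in `PSL(2,ℂ)`, as a set. -/
def NmlH : Set PSL2C := {g | (fun h => g * h * g⁻¹) '' Hset = Hset}

/-! ### Topological group structure -/

instance instTopGroupSL2C : IsTopologicalGroup SL2C :=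
  Matrix.SpecialLinearGroup.topologicalGroup

instance instT2SL2C : T2Space SL2C :=
  inferInstanceAs (T2Space {A : Matrix (Fin 2) (Fin 2) ℂ // A.det = 1})

lemma coe_sl_inducing : Topology.IsInducing (fun g : SL2C => (g : Matrix (Fin 2) (Fin 2) ℂ)) :=
  Topology.IsInducing.subtypeVal

instance instTopGroupPSL2C : IsTopologicalGroup PSL2C :=
  inferInstanceAs (IsTopologicalGroup (SL2C ⧸ Subgroup.center SL2C))

lemma center_closed : IsClosed ((Subgroup.center SL2C : Subgroup SL2C) : Set SL2C) := by
  have : ((Subgroup.center SL2C : Subgroup SL2C) : Set SL2C) =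
      ⋂ h : SL2C, {g | h * g = g * h} := by
    ext g
    simp [Subgroup.mem_center_iff]
  rw [this]
  exact isClosed_iInter fun h => isClosed_eq (by fun_prop) (by fun_prop)

instance instT2PSL2C : T2Space PSL2C := by
  have : IsClosed ((Subgroup.center SL2C : Subgroup SL2C) : Set SL2C) := center_closed
  exact inferInstanceAs (T2Space (SL2C ⧸ Subgroup.center SL2C))

lemma pr_continuous : Continuous pr := QuotientGroup.continuous_mk

lemma pr_surj (g : PSL2C) : ∃ m : SL2C, pr m = g := QuotientGroup.mk_surjective g

/-! ### The linearization -/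

/-- The Hermitian form of the real circle. -/
def JJ : Matrix (Fin 2) (Fin 2) ℂ := !![0, Complex.I; -Complex.I, 0]

/-- `m ↦ m⁻¹ J m⁻*`. -/
def etaM (m : SL2C) : Matrix (Fin 2) (Fin 2) ℂ :=
  (m⁻¹ : SL2C).1 * JJ * (m⁻¹ : SL2C).1ᴴ

lemma etaM_mul (m h : SL2C) :
    etaM (m * h) = (h⁻¹ : SL2C).1 * etaM m * (h⁻¹ : SL2C).1ᴴ := by
  have : ((m * h)⁻¹ : SL2C).1 = (h⁻¹ : SL2C).1 * (m⁻¹ : SL2C).1 := by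
    rw [_root_.mul_inv_rev]; rfl
  simp only [etaM, this, Matrix.conjTranspose_mul, Matrix.mul_assoc]

lemma etaM_center (m z : SL2C) (hz : z ∈ Subgroup.center SL2C) : etaM (m * z) = etaM m := by
  have hz' : z⁻¹ ∈ Subgroup.center SL2C := Subgroup.inv_mem _ hz
  obtain ⟨r, hr, hrz⟩ := Matrix.SpecialLinearGroup.mem_center_iff.1 hz'
  rw [etaM_mul, ← hrz]
  have hr2 : r * star r = 1 := by
    have : r = 1 ∨ r = -1 := by
      simpa using hr
    rcases this with rfl | rfl <;> simp
  rw [Matrix.scalar_apply, Matrix.diagonal_conjTranspose]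
  ext i j
  simp only [Matrix.mul_diagonal, Matrix.diagonal_mul, Pi.star_apply]
  linear_combination (etaM m i j) * hr2

/-- The linearization on `PSL(2,ℂ)`. -/
def eta (g : PSL2C) : Matrix (Fin 2) (Fin 2) ℂ :=
  Quotient.liftOn' g etaM (fun a b hab => by
    rw [QuotientGroup.leftRel_apply] at hab
    have := etaM_center a _ hab
    rw [← this, mul_inv_cancel_left])

lemma eta_pr (m : SL2C) : eta (pr m) = etaM m := rfl

lemma etaM_continuous : Continuous etaM := by
  have h : Continuous (fun m : SL2C => (m⁻¹ : SL2C).1) :=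
    continuous_subtype_val.comp (continuous_inv : Continuous (fun m : SL2C => m⁻¹))
  exact (h.mul continuous_const).mul h.matrix_conjTranspose

lemma eta_continuous : Continuous eta :=
  Continuous.quotient_liftOn' etaM_continuous _

/-- The stabilizer of the line of `J`. -/
def NN : Set PSL2C := {g | eta g = JJ ∨ eta g = -JJ}

lemma JJ_real (r : Matrix.SpecialLinearGroup (Fin 2) ℝ) :
    etaM (Matrix.SpecialLinearGroup.map (algebraMap ℝ ℂ) r) = JJ := by
  have hd := r.det_coe
  rw [Matrix.det_fin_two] at hd
  have hd' : ((r.1 0 0 : ℝ) : ℂ) * r.1 1 1 - (r.1 0 1 : ℝ) * (r.1 1 0 : ℝ) = 1 := by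
    exact_mod_cast hd
  rw [etaM, Matrix.SpecialLinearGroup.coe_inv, Matrix.adjugate_fin_two]
  ext i j
  fin_cases i <;> fin_cases j <;>
    simp [JJ, Matrix.mul_apply, Fin.sum_univ_two]
  · ring
  · linear_combination Complex.I * hd'
  · linear_combination -Complex.I * hd'
  · ring

lemma eta_mul (g : PSL2C) (h : SL2C) :
    eta (g * pr h) = (h⁻¹ : SL2C).1 * eta g * (h⁻¹ : SL2C).1ᴴ := by
  obtain ⟨m, rfl⟩ := pr_surj g
  rw [← map_mul, eta_pr, eta_pr, etaM_mul]

lemma eta_one : eta 1 = JJ := by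
  rw [← map_one pr, eta_pr, etaM]
  simp

lemma eta_mul_left (n g : PSL2C) (c : ℂ) (h : eta n = c • JJ) : eta (n * g) = c • eta g := by
  obtain ⟨m, rfl⟩ := pr_surj g
  rw [eta_mul, h, eta_pr, etaM]
  simp

lemma NN_iff (n : PSL2C) : n ∈ NN ↔ ∃ c : ℂ, (c = 1 ∨ c = -1) ∧ eta n = c • JJ := by
  constructor
  · rintro (h | h)
    · exact ⟨1, Or.inl rfl, by simpa using h⟩
    · exact ⟨-1, Or.inr rfl, by simpa using h⟩
  · rintro ⟨c, rfl | rfl, h⟩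
    · exact Or.inl (by simpa using h)
    · exact Or.inr (by simpa using h)

lemma NN_mul {n g : PSL2C} (hn : n ∈ NN) (hg : g ∈ NN) : n * g ∈ NN := by
  rw [NN_iff] at *
  obtain ⟨c, hc, h⟩ := hn
  obtain ⟨c', hc', h'⟩ := hg
  refine ⟨c * c', ?_, ?_⟩
  · rcases hc with rfl | rfl <;> rcases hc' with rfl | rfl <;> simp
  · rw [eta_mul_left n g c h, h', smul_smul]

lemma eta_inv {n : PSL2C} {c : ℂ} (hc : c = 1 ∨ c = -1) (h : eta n = c • JJ) :
    eta n⁻¹ = c • JJ := by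
  have h1 := eta_mul_left n n⁻¹ c h
  rw [mul_inv_cancel, eta_one] at h1
  rw [h1, smul_smul]
  rcases hc with rfl | rfl <;> simp

lemma NN_inv {n : PSL2C} (hn : n ∈ NN) : n⁻¹ ∈ NN := by
  rw [NN_iff] at *
  obtain ⟨c, hc, h⟩ := hn
  exact ⟨c, hc, eta_inv hc h⟩

lemma eta_H {h : PSL2C} (hh : h ∈ Hset) : eta h = JJ := by
  obtain ⟨r, rfl⟩ := hh
  rw [eta_pr, JJ_real]

lemma NN_of_H {h : PSL2C} (hh : h ∈ Hset) : h ∈ NN := Or.inl (eta_H hh)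

lemma H_of_eta {h : PSL2C} (hh : eta h = JJ) : h ∈ Hset := by
  obtain ⟨m, rfl⟩ := pr_surj h
  rw [eta_pr, etaM] at hh
  have h1 : JJ * (m⁻¹ : SL2C).1ᴴ = m.1 * JJ := by
    have h2 : m.1 * (m⁻¹ : SL2C).1 = 1 := by
      have : (m * m⁻¹).1 = (1 : SL2C).1 := by rw [mul_inv_cancel]
      exact this
    calc JJ * (m⁻¹ : SL2C).1ᴴ = (m.1 * (m⁻¹ : SL2C).1) * JJ * (m⁻¹ : SL2C).1ᴴ := by
          rw [h2, Matrix.one_mul]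
      _ = m.1 * ((m⁻¹ : SL2C).1 * JJ * (m⁻¹ : SL2C).1ᴴ) := by
          simp only [Matrix.mul_assoc]
      _ = m.1 * JJ := by rw [hh]
  rw [Matrix.SpecialLinearGroup.coe_inv, Matrix.adjugate_fin_two] at h1
  have e00 := congrFun (congrFun h1 0) 0
  have e01 := congrFun (congrFun h1 0) 1
  have e10 := congrFun (congrFun h1 1) 0
  have e11 := congrFun (congrFun h1 1) 1
  simp [JJ, Matrix.mul_apply, Fin.sum_univ_two] at e00 e01 e10 e11
  have key : ∀ i j, (((m.1 i j).re : ℝ) : ℂ) = m.1 i j := by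
    intro i j
    rw [← Complex.conj_eq_iff_re]
    fin_cases i <;> fin_cases j <;> simp
    · exact mul_left_cancel₀ Complex.I_ne_zero (e01.trans (mul_comm _ _))
    · exact mul_left_cancel₀ Complex.I_ne_zero (e00.trans (mul_comm _ _))
    · exact mul_left_cancel₀ Complex.I_ne_zero (e11.trans (mul_comm _ _))
    · exact mul_left_cancel₀ Complex.I_ne_zero (e10.trans (mul_comm _ _))
  have hdet : (Matrix.of fun i j => (m.1 i j).re : Matrix (Fin 2) (Fin 2) ℝ).det = 1 := by
    have hd := m.det_coe
    rw [Matrix.det_fin_two] at hd ⊢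
    rw [← key 0 0, ← key 0 1, ← key 1 0, ← key 1 1] at hd
    simp only [Matrix.of_apply]
    exact_mod_cast hd
  refine ⟨⟨_, hdet⟩, ?_⟩
  congr 1
  ext i j
  exact (key i j).symm

lemma NmlH_of_NN {n : PSL2C} (hn : n ∈ NN) : n ∈ NmlH := by
  have key : ∀ n ∈ NN, ∀ h ∈ Hset, n * h * n⁻¹ ∈ Hset := by
    intro n hn h hh
    rw [NN_iff] at hn
    obtain ⟨c, hc, hn⟩ := hn
    apply H_of_eta
    rw [mul_assoc, eta_mul_left n _ c hn, eta_mul_left h _ 1 (by simpa using eta_H hh),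
      eta_inv hc hn, one_smul, smul_smul]
    rcases hc with rfl | rfl <;> simp
  apply Set.Subset.antisymm
  · rintro _ ⟨h, hh, rfl⟩
    exact key n hn h hh
  · intro h hh
    refine ⟨n⁻¹ * h * n, ?_, by group⟩
    simpa using key n⁻¹ (NN_inv hn) h hh

/-! ### Coordinates -/

lemma etaM_herm (m : SL2C) : (etaM m)ᴴ = etaM m := by
  have hJ : JJᴴ = JJ := by
    ext i j
    fin_cases i <;> fin_cases j <;> simp [JJ]
  simp only [etaM, Matrix.conjTranspose_mul, Matrix.conjTranspose_conjTranspose, hJ,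
    Matrix.mul_assoc]

lemma etaM_det (m : SL2C) : (etaM m).det = -1 := by
  have h : (m⁻¹ : SL2C).1.det = 1 := (m⁻¹ : SL2C).2
  rw [etaM, Matrix.det_mul, Matrix.det_mul, Matrix.det_conjTranspose, h]
  simp [JJ, Matrix.det_fin_two_of]

def ca (g : PSL2C) : ℝ := (eta g 0 0).re
def cd (g : PSL2C) : ℝ := (eta g 1 1).re
def br (g : PSL2C) : ℝ := (eta g 0 1).re
def bi (g : PSL2C) : ℝ := (eta g 0 1).im

lemma ca_cont : Continuous ca := Complex.continuous_re.comp (eta_continuous.matrix_elem 0 0)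
lemma cd_cont : Continuous cd := Complex.continuous_re.comp (eta_continuous.matrix_elem 1 1)
lemma br_cont : Continuous br := Complex.continuous_re.comp (eta_continuous.matrix_elem 0 1)
lemma bi_cont : Continuous bi := Complex.continuous_im.comp (eta_continuous.matrix_elem 0 1)

lemma eta_eq (g : PSL2C) :
    eta g = !![(ca g : ℂ), br g + bi g * Complex.I; br g - bi g * Complex.I, (cd g : ℂ)] := by
  obtain ⟨m, hm⟩ := pr_surj g
  have h : (eta g)ᴴ = eta g := by rw [← hm]; exact etaM_herm m
  have e00 := congrFun (congrFun h 0) 0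
  have e10 := congrFun (congrFun h 1) 0
  have e11 := congrFun (congrFun h 1) 1
  simp only [Matrix.conjTranspose_apply] at e00 e10 e11
  ext i j
  fin_cases i <;> fin_cases j <;> simp [ca, br, bi, cd]
  · exact (Complex.conj_eq_iff_re.1 e00).symm
  · rw [← e10]
    apply Complex.ext <;> simp
  · exact (Complex.conj_eq_iff_re.1 e11).symm

lemma coord_det (g : PSL2C) : ca g * cd g = br g ^ 2 + bi g ^ 2 - 1 := by
  obtain ⟨m, hm⟩ := pr_surj g
  have h : (eta g).det = -1 := by rw [← hm]; exact etaM_det m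
  rw [eta_eq, Matrix.det_fin_two_of] at h
  have h2 := congrArg Complex.re h
  simp at h2
  linarith

lemma eta_u (g : PSL2C) (t : ℂ) : eta (g * pr (uMat t)) =
    !![(1 : ℂ), -t; 0, 1] * eta g * !![(1 : ℂ), 0; -(starRingEnd ℂ) t, 1] := by
  rw [eta_mul, Matrix.SpecialLinearGroup.coe_inv]
  congr 1
  · congr 1
    simp [uMat, Matrix.adjugate_fin_two]
  · ext i j
    fin_cases i <;> fin_cases j <;> simp [uMat, Matrix.adjugate_fin_two]

lemma coord_u (g : PSL2C) (t : ℝ) :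
    ca (g * uu t) = cd g * t ^ 2 - 2 * br g * t + ca g ∧ br (g * uu t) = br g - cd g * t ∧
    bi (g * uu t) = bi g ∧ cd (g * uu t) = cd g := by
  have h := eta_u g t
  rw [eta_eq g] at h
  refine ⟨?_, ?_, ?_, ?_⟩
  all_goals
    simp only [ca, br, bi, cd] at h ⊢
    rw [uu, h]
    simp [Matrix.mul_apply, Fin.sum_univ_two]
    try ring

lemma coord_v (g : PSL2C) (s : ℝ) :
    ca (g * vv s) = cd g * s ^ 2 - 2 * bi g * s + ca g ∧ br (g * vv s) = br g ∧
    bi (g * vv s) = bi g - cd g * s ∧ cd (g * vv s) = cd g := by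
  have h := eta_u g (s * Complex.I)
  rw [eta_eq g] at h
  refine ⟨?_, ?_, ?_, ?_⟩
  all_goals
    simp only [ca, br, bi, cd] at h ⊢
    rw [vv, h]
    simp [Matrix.mul_apply, Fin.sum_univ_two]
    try ring

lemma coord_a (g : PSL2C) (l : ℝ) (hl : l ≠ 0) :
    ca (g * pr (tri l hl 0)) = ca g / l ^ 2 ∧ br (g * pr (tri l hl 0)) = br g ∧
    bi (g * pr (tri l hl 0)) = bi g ∧ cd (g * pr (tri l hl 0)) = cd g * l ^ 2 := by
  have h : eta (g * pr (tri l hl 0)) =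
    !![((l⁻¹ : ℝ) : ℂ), 0; 0, l] * eta g * !![((l⁻¹ : ℝ) : ℂ), 0; 0, l] := by
    rw [eta_mul, Matrix.SpecialLinearGroup.coe_inv]
    congr 1
    · congr 1
      simp [tri, Matrix.adjugate_fin_two]
    · ext i j
      fin_cases i <;> fin_cases j <;> simp [tri, Matrix.adjugate_fin_two]
  rw [eta_eq g] at h
  refine ⟨?_, ?_, ?_, ?_⟩
  all_goals
    simp only [ca, br, bi, cd] at h ⊢
    rw [h]
    simp [Matrix.mul_apply, Fin.sum_univ_two, -Complex.ofReal_inv]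
    try field_simp

lemma eta_coord {g : PSL2C} {e : ℝ} (h1 : ca g = 0) (h2 : br g = 0) (h3 : bi g = e)
    (h4 : cd g = 0) : eta g = (e : ℂ) • JJ := by
  rw [eta_eq, h1, h2, h3, h4]
  ext i j
  fin_cases i <;> fin_cases j <;> simp [JJ]


lemma map_coe (r : Matrix.SpecialLinearGroup (Fin 2) ℝ) :
    (Matrix.SpecialLinearGroup.map (algebraMap ℝ ℂ) r).1 =
      !![(r.1 0 0 : ℂ), (r.1 0 1 : ℂ); (r.1 1 0 : ℂ), (r.1 1 1 : ℂ)] := by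
  ext i j
  fin_cases i <;> fin_cases j <;> rfl

lemma NmlH_sub {n : PSL2C} (hn : n ∈ NmlH) : n ∈ NN := by
  have key : ∀ h ∈ Hset, eta (n * h) = eta n := by
    intro h hh
    have h1 : n * h * n⁻¹ ∈ Hset := by
      have : n * h * n⁻¹ ∈ (fun h => n * h * n⁻¹) '' Hset := ⟨h, hh, rfl⟩
      rwa [show (fun h => n * h * n⁻¹) '' Hset = Hset from hn] at this
    have h2 := eta_mul_left (n * h * n⁻¹) n 1 (by simpa using eta_H h1)
    simpa using h2
  have hu : uu 1 ∈ Hset := by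
    refine ⟨⟨!![1, 1; 0, 1], by simp [Matrix.det_fin_two_of]⟩, ?_⟩
    rw [uu]
    congr 1
    refine Subtype.ext (Eq.trans ?_ (map_coe _).symm)
    simp [uMat]
  obtain ⟨k1, k2, -, -⟩ := coord_u n 1
  have k := key _ hu
  have hd : cd n = 0 := by
    have : br (n * uu 1) = br n := by simp only [br, k]
    linarith
  have hb : br n = 0 := by
    have : ca (n * uu 1) = ca n := by simp only [ca, k]
    rw [hd] at k1
    linarith
  -- the lower triangular direction
  let w : Matrix.SpecialLinearGroup (Fin 2) ℝ :=
    ⟨!![1, 0; 1, 1], by simp [Matrix.det_fin_two_of]⟩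
  have kw := key (pr (Matrix.SpecialLinearGroup.map (algebraMap ℝ ℂ) w)) ⟨w, rfl⟩
  have hw : eta (n * pr (Matrix.SpecialLinearGroup.map (algebraMap ℝ ℂ) w)) =
      !![(1 : ℂ), 0; -1, 1] * eta n * !![(1 : ℂ), -1; 0, 1] := by
    rw [eta_mul, Matrix.SpecialLinearGroup.coe_inv, map_coe]
    congr 1
    · congr 1
      simp [w, Matrix.adjugate_fin_two]
    · ext i j
      fin_cases i <;> fin_cases j <;> simp [w, Matrix.adjugate_fin_two]
  rw [kw, eta_eq n, hd, hb] at hw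
  have ha : ca n = 0 := by
    have := congrArg Complex.re (congrFun (congrFun hw 0) 1)
    simp [Matrix.mul_apply, Fin.sum_univ_two] at this
    linarith
  have hdet := coord_det n
  rw [ha, hb] at hdet
  have hc : bi n = 1 ∨ bi n = -1 := by
    have : bi n ^ 2 = 1 := by nlinarith
    simpa using this
  rw [NN_iff]
  refine ⟨(bi n : ℂ), ?_, eta_coord ha hb rfl hd⟩
  rcases hc with h | h <;> simp [h]

/-- The imaginary element of the normalizer. -/
def n0M : SL2C := ⟨!![Complex.I, 0; 0, -Complex.I], by simp [Matrix.det_fin_two_of]⟩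

lemma eta_n0 : eta (pr n0M) = (-1 : ℂ) • JJ := by
  rw [eta_pr, etaM, Matrix.SpecialLinearGroup.coe_inv]
  ext i j
  fin_cases i <;> fin_cases j <;>
    simp [n0M, JJ, Matrix.adjugate_fin_two, Matrix.mul_apply, Fin.sum_univ_two]

/-! ### Local section -/

lemma local_section (O : Set PSL2C) (hO : O ∈ nhds (1 : PSL2C)) :
    ∃ r > (0 : ℝ), ∀ g : PSL2C, |ca g| < r → |br g| < r → |bi g - 1| < r → |cd g| < r →
      ∃ h ∈ Hset, ∃ o ∈ O, g = h * o := by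
  -- the square root, as a matrix valued function of the four coordinates
  let F : ℝ × ℝ × ℝ × ℝ → Matrix (Fin 2) (Fin 2) ℂ := fun p =>
    (((Real.sqrt (2 * p.2.2.1 + 2))⁻¹ : ℝ) : ℂ) •
      !![p.2.2.1 - p.2.1 * Complex.I + 1, p.1 * Complex.I;
         - p.2.2.2 * Complex.I, p.2.2.1 + p.2.1 * Complex.I + 1]
  let p0 : ℝ × ℝ × ℝ × ℝ := (0, 0, 1, 0)
  have hs4 : Real.sqrt (2 * 1 + 2) = 2 := by
    rw [show (2 * 1 + 2 : ℝ) = 2 ^ 2 by norm_num]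
    exact Real.sqrt_sq (by norm_num)
  have hF0 : F p0 = 1 := by
    simp only [F, p0, hs4]
    ext i j
    fin_cases i <;> fin_cases j <;> simp <;> norm_num
  have hFc : ContinuousAt F p0 := by
    have h1 : ContinuousAt (fun p : ℝ × ℝ × ℝ × ℝ => (((Real.sqrt (2 * p.2.2.1 + 2))⁻¹ : ℝ) : ℂ)) p0 := by
      apply Complex.continuous_ofReal.continuousAt.comp
      apply ContinuousAt.inv₀
      · fun_prop
      · simp only [p0, hs4]; norm_num
    refine h1.smul (Continuous.continuousAt ?_)
    refine continuous_matrix ?_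
    intro i j
    fin_cases i <;> fin_cases j <;> simp <;> fun_prop
  -- pull back the neighbourhood
  have hO' : (fun m : SL2C => pr m⁻¹) ⁻¹' O ∈ nhds (1 : SL2C) := by
    have hc : Continuous (fun m : SL2C => pr m⁻¹) := pr_continuous.comp continuous_inv
    exact hc.continuousAt.preimage_mem_nhds (by simpa using hO)
  rw [coe_sl_inducing.nhds_eq_comap, Filter.mem_comap] at hO'
  obtain ⟨B, hB, hBO⟩ := hO'
  have hFB : ∀ᶠ p in nhds p0, F p ∈ B := by
    apply hFc
    rw [hF0]
    simpa using hB
  obtain ⟨r, hr, hrB⟩ := Metric.eventually_nhds_iff.1 hFB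
  refine ⟨min r 1, by positivity, ?_⟩
  intro g h1 h2 h3 h4
  have hmem : F (ca g, br g, bi g, cd g) ∈ B := by
    apply hrB
    simp only [p0, Prod.dist_eq, Real.dist_eq, sub_zero]
    simp only [lt_min_iff] at h1 h2 h3 h4
    simp [h1, h2, h3, h4]
  have hpos : 0 < 2 * bi g + 2 := by
    have := (abs_lt.1 (h3.trans_le (min_le_right _ _))).1
    linarith
  set s := Real.sqrt (2 * bi g + 2) with hs
  have hsp : 0 < s := Real.sqrt_pos.2 hpos
  have hsq : s ^ 2 = 2 * bi g + 2 := Real.sq_sqrt hpos.le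
  have hdet0 := coord_det g
  have hsC : (s : ℂ) ≠ 0 := by exact_mod_cast hsp.ne'
  have hsqC : (s : ℂ) ^ 2 = 2 * bi g + 2 := by exact_mod_cast hsq
  have hdetC : (ca g : ℂ) * cd g = br g ^ 2 + bi g ^ 2 - 1 := by exact_mod_cast hdet0
  have hFdet : (F (ca g, br g, bi g, cd g)).det = 1 := by
    simp only [F, ← hs, Matrix.det_smul, Matrix.det_fin_two_of]
    simp only [Fintype.card_fin, Complex.ofReal_inv]
    field_simp
    rw [hsqC]
    linear_combination -hdetC - (br g ^ 2 - (ca g : ℂ) * cd g) * (Complex.I_sq)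
  let q : SL2C := ⟨F (ca g, br g, bi g, cd g), hFdet⟩
  have hq : etaM q⁻¹ = eta g := by
    rw [etaM, inv_inv, eta_eq g]
    ext i j
    fin_cases i <;> fin_cases j <;>
      simp [q, F, ← hs, JJ, Matrix.mul_apply, Fin.sum_univ_two] <;>
      field_simp <;> rw [hsqC]
    · linear_combination (-(2 * (bi g : ℂ) + 2) * ca g) * Complex.I_sq
    · linear_combination Complex.I * hdetC + (-Complex.I * ca g * cd g + Complex.I * br g ^ 2
        - 2 * ((bi g : ℂ) + 1) * br g) * Complex.I_sq
    · linear_combination -Complex.I * hdetC + (Complex.I * ca g * cd g - Complex.I * br g ^ 2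
        - 2 * ((bi g : ℂ) + 1) * br g) * Complex.I_sq
    · linear_combination (-(2 * (bi g : ℂ) + 2) * cd g) * Complex.I_sq
  refine ⟨g * pr q, ?_, pr q⁻¹, hBO hmem, ?_⟩
  · apply H_of_eta
    rw [eta_mul, ← hq, etaM, inv_inv]
    have h2 : (q⁻¹ : SL2C).1 * q.1 = 1 := by
      have : (q⁻¹ * q).1 = (1 : SL2C).1 := by rw [inv_mul_cancel]
      exact this
    have h3 : q.1ᴴ * (q⁻¹ : SL2C).1ᴴ = 1 := by
      rw [← Matrix.conjTranspose_mul, h2, Matrix.conjTranspose_one]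
    calc (q⁻¹ : SL2C).1 * (q.1 * JJ * q.1ᴴ) * (q⁻¹ : SL2C).1ᴴ
        = ((q⁻¹ : SL2C).1 * q.1) * JJ * (q.1ᴴ * (q⁻¹ : SL2C).1ᴴ) := by
          simp only [Matrix.mul_assoc]
      _ = JJ := by rw [h2, h3, Matrix.one_mul, Matrix.mul_one]
  · rw [map_inv, mul_inv_cancel_right]


/-! ### Uniform discreteness of the orbit of `J` -/

/-- Coordinate neighbourhood of `±J`. -/
def near (r : ℝ) (g : PSL2C) : Prop :=
  |ca g| < r ∧ |br g| < r ∧ |(|bi g| - 1)| < r ∧ |cd g| < r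

lemma coord_smul {n : PSL2C} {c : ℝ} (h : eta n = (c : ℂ) • JJ) (g : PSL2C) :
    ca (n * g) = c * ca g ∧ br (n * g) = c * br g ∧ bi (n * g) = c * bi g ∧
      cd (n * g) = c * cd g := by
  have := eta_mul_left n g c h
  simp [ca, br, bi, cd, this]

lemma NN_real {n : PSL2C} (hn : n ∈ NN) : ∃ c : ℝ, |c| = 1 ∧ eta n = (c : ℂ) • JJ := by
  rcases hn with h | h
  · exact ⟨1, by simp, by simpa using h⟩
  · exact ⟨-1, by simp, by simpa using h⟩

lemma coord_abs {n : PSL2C} (hn : n ∈ NN) (g : PSL2C) :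
    |ca (n * g)| = |ca g| ∧ |br (n * g)| = |br g| ∧ |bi (n * g)| = |bi g| ∧
      |cd (n * g)| = |cd g| := by
  obtain ⟨c, hc, h⟩ := NN_real hn
  obtain ⟨h1, h2, h3, h4⟩ := coord_smul h g
  simp [h1, h2, h3, h4, abs_mul, hc]

lemma NN_section (O : Set PSL2C) (hO : O ∈ nhds (1 : PSL2C)) :
    ∃ r > (0 : ℝ), ∀ g : PSL2C, near r g → ∃ n ∈ NN, ∃ o ∈ O, g = n * o := by
  obtain ⟨r, hr, H⟩ := local_section O hO
  refine ⟨r, hr, ?_⟩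
  rintro g ⟨h1, h2, h3, h4⟩
  rcases le_total 0 (bi g) with hb | hb
  · rw [abs_of_nonneg hb] at h3
    obtain ⟨h, hh, o, ho, rfl⟩ := H g h1 h2 h3 h4
    exact ⟨h, NN_of_H hh, o, ho, rfl⟩
  · rw [abs_of_nonpos hb] at h3
    have hn0 : pr n0M ∈ NN := Or.inr (by simpa using eta_n0)
    obtain ⟨k1, k2, k3, k4⟩ := coord_smul (n := pr n0M) (c := -1) (by simpa using eta_n0) g
    obtain ⟨h, hh, o, ho, e⟩ := H (pr n0M * g) (by rw [k1]; simpa using h1)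
      (by rw [k2]; simpa using h2) (by rw [k3]; simpa using h3) (by rw [k4]; simpa using h4)
    refine ⟨(pr n0M)⁻¹ * h, NN_mul (NN_inv hn0) (NN_of_H hh), o, ho, ?_⟩
    rw [mul_assoc, ← e, inv_mul_cancel_left]

lemma uniform_discrete (Γ : Subgroup PSL2C) (hdisc : DiscreteTopology Γ)
    (hHcocpt : ∃ K : Set PSL2C, K ⊆ Hset ∧ IsCompact K ∧
      ∀ h ∈ Hset, ∃ γ ∈ ((Γ : Set PSL2C) ∩ Hset), ∃ k ∈ K, h = γ * k) :
    ∃ r > (0 : ℝ), ∀ g : PSL2C, ∀ γ ∈ Γ, near r g → near r (γ * g) → γ ∈ NN := by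
  obtain ⟨K, hKH, hK, hKc⟩ := hHcocpt
  have hn0 : pr n0M ∈ NN := Or.inr (by simpa using eta_n0)
  let K' : Set PSL2C := K ∪ (fun k => k * pr n0M) '' K
  have hK' : IsCompact K' := hK.union (hK.image (by fun_prop))
  have hK'N : K' ⊆ NN := by
    rintro x (hx | ⟨k, hk, rfl⟩)
    · exact NN_of_H (hKH hx)
    · exact NN_mul (NN_of_H (hKH hk)) hn0
  have hcov : ∀ n ∈ NN, ∃ γ ∈ Γ, γ ∈ NN ∧ ∃ k ∈ K', n = γ * k := by
    intro n hn
    rcases hn with h | h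
    · obtain ⟨γ, hγ, k, hk, rfl⟩ := hKc n (H_of_eta h)
      exact ⟨γ, hγ.1, NN_of_H hγ.2, k, Or.inl hk, rfl⟩
    · have h2 : n * (pr n0M)⁻¹ ∈ Hset := by
        apply H_of_eta
        rw [eta_mul_left n _ (-1) (by simpa using h), eta_inv (Or.inr rfl) eta_n0]
        simp
      obtain ⟨γ, hγ, k, hk, e⟩ := hKc _ h2
      refine ⟨γ, hγ.1, NN_of_H hγ.2, k * pr n0M, Or.inr ⟨k, hk, rfl⟩, ?_⟩
      rw [← mul_assoc, ← e, inv_mul_cancel_right]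
  -- the forbidden set is closed
  have hFc : IsClosed ((Γ : Set PSL2C) \ NN) := by
    have h1 : IsClosed (Γ : Set PSL2C) := Subgroup.isClosed_of_discrete
    have h2 := h1.isClosedEmbedding_subtypeVal.isClosedMap
      {x : (Γ : Set PSL2C) | (x : PSL2C) ∉ NN} (by
        have : DiscreteTopology (Γ : Set PSL2C) := hdisc
        exact isClosed_discrete _)
    convert h2 using 1
    ext x
    simp [and_comm]
  let f : (PSL2C × PSL2C) × (PSL2C × PSL2C) → PSL2C :=
    fun p => p.1.1 * p.2.1 * p.2.2⁻¹ * p.1.2⁻¹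
  have hf : Continuous f := by fun_prop
  have hopen : IsOpen (f ⁻¹' ((Γ : Set PSL2C) \ NN)ᶜ) := hFc.isOpen_compl.preimage hf
  obtain ⟨u, v, hu, hv, hKu, h1v, huv⟩ := generalized_tube_lemma (hK'.prod hK')
    (isCompact_singleton (x := ((1 : PSL2C), (1 : PSL2C)))) hopen (by
      rintro ⟨⟨k, k'⟩, p⟩ ⟨⟨hk, hk'⟩, hp⟩
      rw [Set.mem_singleton_iff] at hp
      subst hp
      simp only [f, Set.mem_preimage, Set.mem_compl_iff, Set.mem_sdiff, not_and, not_not]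
      intro _
      simpa using NN_mul (hK'N hk) (NN_inv (hK'N hk')))
  have hvn : v ∈ nhds ((1 : PSL2C), (1 : PSL2C)) := hv.mem_nhds (h1v rfl)
  rw [nhds_prod_eq, Filter.mem_prod_self_iff] at hvn
  obtain ⟨O, hO, hOv⟩ := hvn
  obtain ⟨r, hr, H⟩ := NN_section O hO
  refine ⟨r, hr, ?_⟩
  intro g γ hγ hg1 hg2
  obtain ⟨n1, hn1, o1, ho1, e1⟩ := H g hg1
  obtain ⟨n2, hn2, o2, ho2, e2⟩ := H (γ * g) hg2
  obtain ⟨γ1, hγ1, hγ1N, k1, hk1, rfl⟩ := hcov n1 hn1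
  obtain ⟨γ2, hγ2, hγ2N, k2, hk2, rfl⟩ := hcov n2 hn2
  have hmem : f ((k2, k1), (o2, o1)) ∈ ((Γ : Set PSL2C) \ NN)ᶜ :=
    huv ⟨hKu ⟨hk2, hk1⟩, hOv ⟨ho2, ho1⟩⟩
  have hfe : f ((k2, k1), (o2, o1)) = γ2⁻¹ * γ * γ1 := by
    simp only [f]
    have : γ2⁻¹ * (γ * g) * g⁻¹ * γ1 = γ2⁻¹ * (γ2 * k2 * o2) * (γ1 * k1 * o1)⁻¹ * γ1 := by
      rw [← e2, ← e1]
    calc k2 * o2 * o1⁻¹ * k1⁻¹ = γ2⁻¹ * (γ2 * k2 * o2) * (γ1 * k1 * o1)⁻¹ * γ1 := by group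
      _ = γ2⁻¹ * γ * γ1 := by rw [← this]; group
  have hG : γ2⁻¹ * γ * γ1 ∈ Γ := Γ.mul_mem (Γ.mul_mem (Γ.inv_mem hγ2) hγ) hγ1
  have hN : γ2⁻¹ * γ * γ1 ∈ NN := by
    by_contra hcon
    rw [hfe] at hmem
    exact hmem ⟨hG, hcon⟩
  have : γ = γ2 * (γ2⁻¹ * γ * γ1) * γ1⁻¹ := by group
  rw [this]
  exact NN_mul (NN_mul hγ2N hN) (NN_inv hγ1N)

/-- The tube around the singular set. -/
def Phi (R δ : ℝ) (g : PSL2C) : Prop := |ca g| < R ∧ |cd g| < δ ∧ 1 - δ < |bi g|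

lemma br_bound {g : PSL2C} {R δ : ℝ} (hδ : 0 < δ) (hδ1 : δ ≤ 1) (h1 : |ca g| ≤ R)
    (h2 : |cd g| < δ) (h3 : 1 - δ < |bi g|) : br g ^ 2 ≤ (R + 2) * δ := by
  have hdet := coord_det g
  have h4 : ca g * cd g ≤ R * δ := by
    calc ca g * cd g ≤ |ca g * cd g| := le_abs_self _
      _ = |ca g| * |cd g| := abs_mul _ _
      _ ≤ R * δ := by gcongr; exact (abs_nonneg _).trans h1
  have h5 : (1 - δ) ^ 2 ≤ bi g ^ 2 := by
    rw [← sq_abs (bi g)]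
    gcongr
  nlinarith

lemma tube_unique (Γ : Subgroup PSL2C) (hdisc : DiscreteTopology Γ)
    (hHcocpt : ∃ K : Set PSL2C, K ⊆ Hset ∧ IsCompact K ∧
      ∀ h ∈ Hset, ∃ γ ∈ ((Γ : Set PSL2C) ∩ Hset), ∃ k ∈ K, h = γ * k) (R : ℝ) (hR : 0 < R) :
    ∃ δ₀ > (0 : ℝ), ∀ δ, 0 < δ → δ ≤ δ₀ → ∀ g : PSL2C, ∀ γ ∈ Γ,
      Phi R δ g → Phi R δ (γ * g) → γ ∈ NN := by
  obtain ⟨r, hr, H⟩ := uniform_discrete Γ hdisc hHcocpt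
  -- `l ^ 2 * r > R`
  obtain ⟨l, hl1, hl⟩ : ∃ l : ℝ, 1 ≤ l ∧ R < r * l :=
    ⟨R / r + 1, by have : 0 < R / r := by positivity
                   linarith, by field_simp; linarith⟩
  have hl0 : l ≠ 0 := by positivity
  have hl2 : R < r * l ^ 2 := by nlinarith [mul_nonneg hr.le (sub_nonneg.2 hl1)]
  let δ₀ := min (min 1 (r / (l ^ 2 * 2))) (min (r ^ 2 / (2 * (R + 2))) (r / (2 * (R + 2))))
  have hδ₀ : 0 < δ₀ := by positivity
  have key : ∀ δ, 0 < δ → δ ≤ δ₀ → ∀ g : PSL2C, Phi R δ g → near r (g * pr (tri l hl0 0)) := by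
    rintro δ hδ hδδ g ⟨h1, h2, h3⟩
    simp only [δ₀, le_min_iff] at hδδ
    obtain ⟨⟨d1, d2⟩, d3, d4⟩ := hδδ
    rw [le_div_iff₀ (by positivity)] at d2 d3 d4
    have hbr := br_bound hδ d1 h1.le h2 h3
    obtain ⟨k1, k2, k3, k4⟩ := coord_a g l hl0
    refine ⟨?_, ?_, ?_, ?_⟩
    · rw [k1, abs_div, abs_of_pos (by positivity : 0 < l ^ 2), div_lt_iff₀ (by positivity)]
      linarith
    · rw [k2]
      apply abs_lt_of_sq_lt_sq _ hr.le
      nlinarith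
    · rw [k3, abs_lt]
      have hb2 : |bi g| ^ 2 ≤ 1 + R * δ := by
        rw [sq_abs]
        have hdet := coord_det g
        have h4 : ca g * cd g ≤ R * δ := by
          calc ca g * cd g ≤ |ca g * cd g| := le_abs_self _
            _ = |ca g| * |cd g| := abs_mul _ _
            _ ≤ R * δ := by gcongr
        nlinarith [sq_nonneg (br g)]
      constructor
      · nlinarith
      · nlinarith [abs_nonneg (bi g)]
    · rw [k4, abs_mul, abs_of_pos (by positivity : 0 < l ^ 2)]
      have : |cd g| * l ^ 2 ≤ δ * l ^ 2 := by gcongr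
      nlinarith
  refine ⟨δ₀, hδ₀, ?_⟩
  intro δ hδ hδδ g γ hγ hg1 hg2
  apply H (g * pr (tri l hl0 0)) γ hγ (key δ hδ hδδ g hg1)
  rw [← mul_assoc]
  exact key δ hδ hδδ _ hg2


/-! ### Measure estimates on the line -/

open MeasureTheory in
lemma quad_small (S : Set ℝ) (s t ε R R' A B C : ℝ) (hε : 0 < ε) (hR : 0 < R) (hst : s < t)
    (hS : S ⊆ Set.Ioc s t) (hq : ∀ x ∈ S, |A * x ^ 2 + B * x + C| < R)
    (hs : R' ≤ |A * s ^ 2 + B * s + C|) (hR' : 48 * R / ε ^ 2 < R') :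
    volume S ≤ ENNReal.ofReal (ε * (t - s)) := by
  by_contra hcon
  rw [not_le] at hcon
  set L := t - s with hL
  have hL0 : 0 < L := by linarith
  set κ := ε * L / 4 with hκ
  have hκ0 : 0 < κ := by positivity
  have hball : ∀ a : ℝ, volume (Metric.ball a κ) = ENNReal.ofReal (2 * κ) :=
    fun a => Real.volume_ball a κ
  have pick : ∀ a b : ℝ, ∃ x ∈ S, κ ≤ |x - a| ∧ κ ≤ |x - b| := by
    intro a b
    by_contra! hno
    have hsub : S ⊆ Metric.ball a κ ∪ Metric.ball b κ := by
      intro x hx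
      by_cases h : κ ≤ |x - a|
      · exact Or.inr (by simpa [Real.dist_eq] using hno x hx h)
      · exact Or.inl (by simpa [Real.dist_eq] using h)
    have := (measure_mono (μ := volume) hsub).trans (measure_union_le _ _)
    rw [hball, hball, ← ENNReal.ofReal_add (by positivity) (by positivity)] at this
    have e : 2 * κ + 2 * κ = ε * L := by rw [hκ]; ring
    rw [e] at this
    exact absurd hcon (not_lt.2 this)
  obtain ⟨x1, hx1, -, -⟩ := pick 0 0
  obtain ⟨x2, hx2, h21, -⟩ := pick x1 x1
  obtain ⟨x3, hx3, h31, h32⟩ := pick x1 x2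
  have hd : ∀ x ∈ S, |s - x| ≤ L := by
    intro x hx
    have := hS hx
    rw [abs_le]
    constructor <;> linarith [this.1, this.2]
  have ne21 : x2 - x1 ≠ 0 := abs_pos.1 (hκ0.trans_le h21)
  have ne31 : x3 - x1 ≠ 0 := abs_pos.1 (hκ0.trans_le h31)
  have ne32 : x3 - x2 ≠ 0 := abs_pos.1 (hκ0.trans_le h32)
  have lag : A * s ^ 2 + B * s + C =
      (A * x1 ^ 2 + B * x1 + C) * ((s - x2) * (s - x3) / ((x2 - x1) * (x3 - x1)))
      - (A * x2 ^ 2 + B * x2 + C) * ((s - x1) * (s - x3) / ((x2 - x1) * (x3 - x2)))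
      + (A * x3 ^ 2 + B * x3 + C) * ((s - x1) * (s - x2) / ((x3 - x1) * (x3 - x2))) := by
    field_simp
    ring
  have bd : ∀ a b c d e : ℝ, |a| < R → |b| ≤ L → |c| ≤ L → κ ≤ |d| → κ ≤ |e| →
      |a * (b * c / (d * e))| ≤ R * (L * L / (κ * κ)) := by
    intro a b c d e ha hb hc hd he
    rw [abs_mul, abs_div, abs_mul, abs_mul]
    gcongr
  have b1 := bd _ _ _ _ _ (hq x1 hx1) (hd x2 hx2) (hd x3 hx3) h21 h31
  have b2 := bd _ _ _ _ _ (hq x2 hx2) (hd x1 hx1) (hd x3 hx3) h21 h32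
  have b3 := bd _ _ _ _ _ (hq x3 hx3) (hd x1 hx1) (hd x2 hx2) h31 h32
  have e : R * (L * L / (κ * κ)) = 16 * R / ε ^ 2 := by
    rw [hκ]; field_simp; norm_num
  rw [e] at b1 b2 b3
  have e2 : 48 * R / ε ^ 2 = 16 * R / ε ^ 2 + 16 * R / ε ^ 2 + 16 * R / ε ^ 2 := by ring
  rw [lag] at hs
  have := abs_add_le ((A * x1 ^ 2 + B * x1 + C) * ((s - x2) * (s - x3) / ((x2 - x1) * (x3 - x1)))
      - (A * x2 ^ 2 + B * x2 + C) * ((s - x1) * (s - x3) / ((x2 - x1) * (x3 - x2))))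
      ((A * x3 ^ 2 + B * x3 + C) * ((s - x1) * (s - x2) / ((x3 - x1) * (x3 - x2))))
  have := abs_sub ((A * x1 ^ 2 + B * x1 + C) * ((s - x2) * (s - x3) / ((x2 - x1) * (x3 - x1))))
      ((A * x2 ^ 2 + B * x2 + C) * ((s - x1) * (s - x3) / ((x2 - x1) * (x3 - x2))))
  linarith

open MeasureTheory in
lemma left_cover (A : Set ℝ) (T c ε : ℝ) (hT : 0 < T) (hc : 0 < c) (hε : 0 < ε)
    (hA : A ⊆ Set.Icc 0 T)
    (h : ∀ t ∈ A, ∃ s, 0 ≤ s ∧ s ≤ t - c ∧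
      volume (A ∩ Set.Ioc s t) ≤ ENNReal.ofReal (ε * (t - s))) :
    volume A ≤ ENNReal.ofReal (ε * T) := by
  have key : ∀ η : ℝ, 0 < η → ∀ n : ℕ, ∀ x : ℝ, 0 ≤ x → x ≤ n * c →
      volume (A ∩ Set.Icc 0 x) ≤ ENNReal.ofReal (ε * x + n * η) := by
    intro η hη n
    induction n with
    | zero =>
      intro x hx0 hx
      have : x = 0 := by simp at hx; linarith
      subst this
      refine (measure_mono Set.inter_subset_right).trans ?_
      simp
    | succ n ih =>
      intro x hx0 hx
      rcases Set.eq_empty_or_nonempty (A ∩ Set.Icc 0 x) with he | hne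
      · rw [he]; simp
      · have hbdd : BddAbove (A ∩ Set.Icc 0 x) := ⟨x, fun z hz => hz.2.2⟩
        obtain ⟨t, ht, hty⟩ := exists_lt_of_lt_csSup hne
          (show sSup (A ∩ Set.Icc 0 x) - η < sSup (A ∩ Set.Icc 0 x) by linarith)
        obtain ⟨s, hs0, hst, hvol⟩ := h t ht.1
        push_cast at hx
        have ihs := ih s hs0 (by linarith [ht.2.2])
        have hsub : A ∩ Set.Icc 0 x ⊆
            ((A ∩ Set.Icc 0 s) ∪ (A ∩ Set.Ioc s t)) ∪ Set.Icc t (t + η) := by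
          intro z hz
          have hz2 := le_csSup hbdd hz
          rcases le_or_gt z s with h1 | h1
          · exact Or.inl (Or.inl ⟨hz.1, hz.2.1, h1⟩)
          rcases le_or_gt z t with h2 | h2
          · exact Or.inl (Or.inr ⟨hz.1, h1, h2⟩)
          · exact Or.inr ⟨h2.le, by linarith⟩
        calc volume (A ∩ Set.Icc 0 x)
            ≤ volume ((A ∩ Set.Icc 0 s) ∪ (A ∩ Set.Ioc s t)) + volume (Set.Icc t (t + η)) :=
              (measure_mono hsub).trans (measure_union_le _ _)
          _ ≤ (volume (A ∩ Set.Icc 0 s) + volume (A ∩ Set.Ioc s t)) +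
              volume (Set.Icc t (t + η)) := by gcongr; exact measure_union_le _ _
          _ ≤ (ENNReal.ofReal (ε * s + n * η) + ENNReal.ofReal (ε * (t - s))) +
              ENNReal.ofReal η := by
                gcongr
                rw [Real.volume_Icc]; simp
          _ = ENNReal.ofReal ((ε * s + n * η) + ε * (t - s) + η) := by
                have h1 : 0 ≤ ε * (t - s) := mul_nonneg hε.le (by linarith)
                rw [← ENNReal.ofReal_add (by positivity) h1,
                  ← ENNReal.ofReal_add (by positivity) hη.le]
          _ ≤ ENNReal.ofReal (ε * x + ((n + 1 : ℕ) : ℝ) * η) := by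
                apply ENNReal.ofReal_le_ofReal
                push_cast
                have : ε * t ≤ ε * x := by gcongr; exact ht.2.2
                linarith
  obtain ⟨n, hn⟩ := exists_nat_ge (T / c)
  have hn' : T ≤ n * c := by rwa [div_le_iff₀ hc] at hn
  have hlim : Tendsto (fun η : ℝ => ENNReal.ofReal (ε * T + n * η)) (nhdsWithin 0 (Set.Ioi 0))
      (nhds (ENNReal.ofReal (ε * T))) := by
    apply ENNReal.tendsto_ofReal
    have : Continuous (fun η : ℝ => ε * T + n * η) := by fun_prop
    have h2 := this.tendsto 0
    simp only [mul_zero, add_zero] at h2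
    exact h2.mono_left nhdsWithin_le_nhds
  refine ge_of_tendsto hlim ?_
  filter_upwards [self_mem_nhdsWithin] with η hη
  have := key η hη n T hT.le hn'
  rwa [Set.inter_eq_left.2 hA] at this

/-! ### The main argument -/

lemma mkX_eq_iff (Γ : Subgroup PSL2C) (a b : PSL2C) :
    mkX Γ a = mkX Γ b ↔ ∃ γ ∈ Γ, a = γ * b := by
  unfold mkX
  rw [Quotient.eq'', QuotientGroup.rightRel_apply]
  constructor
  · intro h
    refine ⟨a * b⁻¹, ?_, by group⟩
    simpa using Γ.inv_mem h
  · rintro ⟨γ, hγ, rfl⟩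
    simpa using Γ.inv_mem hγ

lemma singular_mem {g : PSL2C} (h1 : cd g = 0) (h2 : |bi g| = 1) :
    ∃ n ∈ NmlH, ∃ w ∈ Vset, g = n * w := by
  have hdet := coord_det g
  rw [h1, mul_zero] at hdet
  have hb2 : bi g ^ 2 = 1 := by rw [← sq_abs, h2]; norm_num
  have hbr : br g = 0 := by
    have : br g ^ 2 = 0 := by linarith
    simpa using this
  -- find `s` with `ca (g * vv s) = 0`
  obtain ⟨k1, k2, k3, k4⟩ := coord_v g (bi g * ca g / 2)
  have hN : g * vv (bi g * ca g / 2) ∈ NN := by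
    rw [NN_iff]
    refine ⟨(bi g : ℂ), ?_, ?_⟩
    · have : bi g = 1 ∨ bi g = -1 := by simpa using hb2
      rcases this with h | h <;> simp [h]
    · refine eta_coord ?_ (k2.trans hbr) (by rw [k3, h1]; ring) (k4.trans h1)
      rw [k1, h1]
      linear_combination (-ca g) * hb2
  refine ⟨_, NmlH_of_NN hN, vv (-(bi g * ca g / 2)), ⟨_, rfl⟩, ?_⟩
  have : vv (bi g * ca g / 2) * vv (-(bi g * ca g / 2)) = 1 := by
    rw [vv, vv, ← map_mul, ← map_one pr]
    congr 1
    refine Subtype.ext ?_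
    change (uMat _).1 * (uMat _).1 = (1 : Matrix (Fin 2) (Fin 2) ℂ)
    rw [Matrix.one_fin_two]
    simp [uMat]
  rw [mul_assoc, this, mul_one]

lemma Phi_open (R δ : ℝ) : IsOpen {g | Phi R δ g} := by
  have h1 : IsOpen {g | |ca g| < R} := isOpen_lt ca_cont.abs continuous_const
  have h2 : IsOpen {g | |cd g| < δ} := isOpen_lt cd_cont.abs continuous_const
  have h3 : IsOpen {g | 1 - δ < |bi g|} := isOpen_lt continuous_const bi_cont.abs
  exact h1.inter (h2.inter h3)

/-- Quantitative non-concentration near the singular set: if `Γ` is a uniform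
lattice in `PSL(2,ℂ)` with `Γ ∩ H` cocompact in `H`, `D ⊆ V` is compact, and
`x = Γg` with `g ∉ Γ𝒩V`, then for every `ε > 0` there is an open set
`Ω ⊇ {Γ(nd) : n ∈ 𝒩, d ∈ D}` such that for all `T > 0` the time spent by
`t ↦ x·u_t`, `t ∈ [0,T]`, in `Ω` is at most `εT`. -/
theorem time_in_neighborhood_of_singular_set_small
    (Γ : Subgroup PSL2C) (hdisc : DiscreteTopology Γ) (hcpt : CompactSpace (XΓ Γ))
    (hHcocpt : ∃ K : Set PSL2C, K ⊆ Hset ∧ IsCompact K ∧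
      ∀ h ∈ Hset, ∃ γ ∈ ((Γ : Set PSL2C) ∩ Hset), ∃ k ∈ K, h = γ * k)
    (D : Set PSL2C) (hD : D ⊆ Vset) (hDcpt : IsCompact D)
    (g : PSL2C)
    (hg : g ∉ {y | ∃ γ ∈ Γ, ∃ n ∈ NmlH, ∃ w ∈ Vset, y = γ * n * w})
    (ε : ℝ) (hε : 0 < ε) :
    ∃ Ω : Set (XΓ Γ), IsOpen Ω ∧
      {y | ∃ n ∈ NmlH, ∃ d ∈ D, y = mkX Γ (n * d)} ⊆ Ω ∧
      ∀ T > (0 : ℝ),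
        MeasureTheory.volume {t : ℝ | t ∈ Set.Icc (0 : ℝ) T ∧ act Γ (mkX Γ g) (uu t) ∈ Ω}
          ≤ ENNReal.ofReal (ε * T) := by
  classical
  -- the size of the compact set
  obtain ⟨R, hR1, hRD⟩ : ∃ R : ℝ, 1 ≤ R ∧ ∀ d ∈ D, |ca d| < R := by
    obtain ⟨C, hC⟩ := hDcpt.exists_bound_of_continuousOn ca_cont.continuousOn
    refine ⟨max (C + 1) 1, le_max_right _ _, fun d hd => ?_⟩
    have := hC d hd
    rw [Real.norm_eq_abs] at this
    exact lt_of_lt_of_le (by linarith) (le_max_left _ _)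
  have hR0 : 0 < R := by linarith
  set R' : ℝ := 48 * R / ε ^ 2 + R + 1 with hR'
  have hR'1 : 48 * R / ε ^ 2 < R' := by rw [hR']; linarith
  have hR'2 : R + 1 ≤ R' := by
    have : 0 ≤ 48 * R / ε ^ 2 := by positivity
    rw [hR']; linarith
  have hRpos : 0 < R' := by linarith
  obtain ⟨δ₀, hδ₀, huniq⟩ := tube_unique Γ hdisc hHcocpt R' hRpos
  obtain ⟨δ, hδ, hδδ₀, hδR, hzero⟩ : ∃ δ, 0 < δ ∧ δ ≤ δ₀ ∧ δ ≤ 1 / (R' + 2) ∧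
      ∀ γ ∈ Γ, ¬ Phi R' δ (γ * g) := by
    by_cases hex : ∃ γ ∈ Γ, Phi R' δ₀ (γ * g)
    · obtain ⟨γ₀, hγ₀, hP₀⟩ := hex
      have hns : 0 < max |cd (γ₀ * g)| (1 - |bi (γ₀ * g)|) := by
        by_contra hcon
        rw [not_lt, max_le_iff] at hcon
        have h1 : cd (γ₀ * g) = 0 := abs_nonpos_iff.1 hcon.1
        have h2 : |bi (γ₀ * g)| = 1 := by
          have hdet := coord_det (γ₀ * g)
          rw [h1, mul_zero] at hdet
          apply le_antisymm _ (by linarith)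
          rw [abs_le_one_iff_mul_self_le_one]
          nlinarith [sq_nonneg (br (γ₀ * g))]
        obtain ⟨n, hn, w, hw, e⟩ := singular_mem h1 h2
        apply hg
        refine ⟨γ₀⁻¹, Γ.inv_mem hγ₀, n, hn, w, hw, ?_⟩
        rw [mul_assoc, ← e, inv_mul_cancel_left]
      refine ⟨min (min δ₀ (1 / (R' + 2))) (max |cd (γ₀ * g)| (1 - |bi (γ₀ * g)|)),
        by positivity, (min_le_left _ _).trans (min_le_left _ _),
        (min_le_left _ _).trans (min_le_right _ _), ?_⟩
      rintro γ hγ ⟨h1, h2, h3⟩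
      have hle : min (min δ₀ (1 / (R' + 2))) (max |cd (γ₀ * g)| (1 - |bi (γ₀ * g)|)) ≤ δ₀ :=
        (min_le_left _ _).trans (min_le_left _ _)
      have hle2 := min_le_right (min δ₀ (1 / (R' + 2))) (max |cd (γ₀ * g)| (1 - |bi (γ₀ * g)|))
      have hNN : γ * γ₀⁻¹ ∈ NN := by
        apply huniq δ₀ hδ₀ le_rfl (γ₀ * g) _ (Γ.mul_mem hγ (Γ.inv_mem hγ₀)) hP₀
        rw [show γ * γ₀⁻¹ * (γ₀ * g) = γ * g by group]
        exact ⟨h1, by linarith, by linarith⟩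
      obtain ⟨-, -, k3, k4⟩ := coord_abs hNN (γ₀ * g)
      rw [show γ * γ₀⁻¹ * (γ₀ * g) = γ * g by group] at k3 k4
      rw [k4] at h2
      rw [k3] at h3
      have hlt : max |cd (γ₀ * g)| (1 - |bi (γ₀ * g)|) <
          max |cd (γ₀ * g)| (1 - |bi (γ₀ * g)|) := by
        rw [max_lt_iff]
        constructor <;> linarith
      exact lt_irrefl _ hlt
    · push Not at hex
      refine ⟨min δ₀ (1 / (R' + 2)), by positivity, min_le_left _ _, min_le_right _ _, ?_⟩
      rintro γ hγ ⟨h1, h2, h3⟩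
      have hle := min_le_left δ₀ (1 / (R' + 2))
      exact hex γ hγ ⟨h1, by linarith, by linarith⟩
  have hδ1 : δ ≤ 1 := hδR.trans (by rw [div_le_one (by linarith)]; linarith)
  have hδR2 : (R' + 2) * δ ≤ 1 := by
    rw [le_div_iff₀ (by linarith)] at hδR
    linarith
  have hmono : ∀ {x : PSL2C}, Phi R δ x → Phi R' δ x :=
    fun hx => ⟨by linarith [hx.1], hx.2⟩
  -- the neighbourhood
  refine ⟨{y | ∃ x, Phi R δ x ∧ y = mkX Γ x}, ?_, ?_, ?_⟩
  · have hq : IsOpen ((Quotient.mk'' : PSL2C → XΓ Γ) ⁻¹' {y | ∃ x, Phi R δ x ∧ y = mkX Γ x}) := by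
      have : (Quotient.mk'' : PSL2C → XΓ Γ) ⁻¹' {y | ∃ x, Phi R δ x ∧ y = mkX Γ x} =
          ⋃ γ ∈ Γ, (fun x => γ * x) ⁻¹' {x | Phi R δ x} := by
        ext z
        simp only [Set.mem_preimage, Set.mem_ofPred_eq, Set.mem_iUnion, exists_prop]
        constructor
        · rintro ⟨x, hx, e⟩
          obtain ⟨γ, hγ, e'⟩ := (mkX_eq_iff Γ z x).1 e
          refine ⟨γ⁻¹, Γ.inv_mem hγ, ?_⟩
          rwa [e', inv_mul_cancel_left]
        · rintro ⟨γ, hγ, hx⟩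
          exact ⟨γ * z, hx, (mkX_eq_iff Γ z (γ * z)).2 ⟨γ⁻¹, Γ.inv_mem hγ, by group⟩⟩
      rw [this]
      exact isOpen_biUnion fun γ _ => (Phi_open R δ).preimage (by fun_prop)
    exact hq
  · rintro y ⟨n, hn, d, hd, rfl⟩
    refine ⟨n * d, ?_, rfl⟩
    obtain ⟨k1, -, k3, k4⟩ := coord_abs (NmlH_sub hn) d
    have hda := hRD d hd
    obtain ⟨s, rfl⟩ := hD hd
    obtain ⟨-, -, l3, l4⟩ := coord_v 1 s
    have c1 : cd 1 = 0 := by simp [cd, eta_one, JJ]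
    have c2 : bi 1 = 1 := by simp [bi, eta_one, JJ]
    rw [one_mul, c1] at l3 l4
    rw [c2] at l3
    refine ⟨by rw [k1]; exact hda, ?_, ?_⟩
    · rw [k4, l4]; simpa using hδ
    · rw [k3, l3]; simpa using hδ
  · intro T hT
    set A : Set ℝ := {t : ℝ | t ∈ Set.Icc (0 : ℝ) T ∧
      act Γ (mkX Γ g) (uu t) ∈ {y | ∃ x, Phi R δ x ∧ y = mkX Γ x}} with hA
    have hAmem : ∀ t ∈ A, 0 ≤ t ∧ ∃ γ ∈ Γ, Phi R δ (γ * g * uu t) := by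
      rintro t ⟨ht, x, hx, e⟩
      refine ⟨ht.1, ?_⟩
      have e2 : mkX Γ (g * uu t) = mkX Γ x := e
      obtain ⟨γ, hγ, e'⟩ := (mkX_eq_iff Γ _ _).1 e2
      refine ⟨γ⁻¹, Γ.inv_mem hγ, ?_⟩
      rwa [mul_assoc, e', inv_mul_cancel_left]
    apply left_cover A T (1 / 2) ε hT (by norm_num) hε (fun t ht => ht.1)
    intro t ht
    obtain ⟨ht0, γ, hγ, hP⟩ := hAmem t ht
    set z := γ * g with hz
    have hq : ∀ x, ca (z * uu x) = cd z * x ^ 2 + (-2 * br z) * x + ca z := by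
      intro x
      rw [(coord_u z x).1]; ring
    obtain ⟨ht1, ht2, ht3⟩ := hP
    rw [(coord_u z t).2.2.2] at ht2
    rw [(coord_u z t).2.2.1] at ht3
    have hz0 : R' ≤ |ca z| := by
      by_contra hcon
      exact hzero γ hγ ⟨not_le.1 hcon, ht2, ht3⟩
    let q : ℝ → ℝ := fun x => cd z * x ^ 2 + (-2 * br z) * x + ca z
    have hqc : Continuous q := by fun_prop
    have hqt : |q t| < R := by rw [hq t] at ht1; exact ht1
    -- last entrance into the larger tube
    obtain ⟨s, hs, hmax⟩ : ∃ s ∈ Set.Icc 0 t ∩ {x | R' ≤ |q x|},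
        ∀ x ∈ Set.Icc 0 t ∩ {x | R' ≤ |q x|}, x ≤ s := by
      have hcl : IsCompact (Set.Icc 0 t ∩ {x | R' ≤ |q x|}) :=
        isCompact_Icc.inter_right (isClosed_le continuous_const hqc.abs)
      obtain ⟨s, hs⟩ := hcl.exists_isGreatest
        ⟨0, ⟨le_rfl, ht0⟩, by simpa [q] using hz0⟩
      exact ⟨s, hs.1, fun x hx => hs.2 hx⟩
    have hst : s < t := by
      rcases lt_or_eq_of_le hs.1.2 with h | h
      · exact h
      · have := hs.2
        rw [h] at this
        have : R' ≤ |q t| := this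
        linarith
    have hin : ∀ x ∈ Set.Ioc s t, |q x| < R' := by
      intro x hx
      by_contra hcon
      exact absurd (hmax x ⟨⟨hs.1.1.trans hx.1.le, hx.2⟩, not_lt.1 hcon⟩) (not_le.2 hx.1)
    have hqs : |q s| ≤ R' := by
      have hcl : IsClosed {x | |q x| ≤ R'} := isClosed_le hqc.abs continuous_const
      have hsub : closure (Set.Ioc s t) ⊆ {x | |q x| ≤ R'} :=
        closure_minimal (fun x hx => (hin x hx).le) hcl
      rw [closure_Ioc hst.ne] at hsub
      exact hsub ⟨le_rfl, hst.le⟩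
    have hPx : ∀ x ∈ Set.Ioc s t, Phi R' δ (z * uu x) := by
      intro x hx
      obtain ⟨-, -, e3, e4⟩ := coord_u z x
      refine ⟨by rw [hq x]; exact hin x hx, by rw [e4]; exact ht2, by rw [e3]; exact ht3⟩
    refine ⟨s, hs.1.1, ?_, ?_⟩
    · have hbr : ∀ x, |q x| ≤ R' → |br z - cd z * x| ≤ 1 := by
        intro x hx
        obtain ⟨-, e2, e3, e4⟩ := coord_u z x
        have := br_bound (g := z * uu x) (R := R') hδ hδ1 (by rw [hq x]; exact hx)
          (by rw [e4]; exact ht2) (by rw [e3]; exact ht3)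
        rw [e2] at this
        rw [abs_le_one_iff_mul_self_le_one]
        nlinarith
      have b1 := hbr s hqs
      have b2 := hbr t (by linarith)
      have e : q s - q t = (t - s) * ((br z - cd z * s) + (br z - cd z * t)) := by
        simp only [q]; ring
      have h1 : 1 ≤ |q s - q t| := by
        have := abs_sub_abs_le_abs_sub (q s) (q t)
        have h2 : R' ≤ |q s| := hs.2
        linarith
      rw [e, abs_mul, abs_of_pos (by linarith : 0 < t - s)] at h1
      have h3 := abs_add_le (br z - cd z * s) (br z - cd z * t)
      have h4 : (t - s) * |(br z - cd z * s) + (br z - cd z * t)| ≤ (t - s) * 2 := by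
        gcongr
        linarith
      linarith
    · refine quad_small _ s t ε R R' (cd z) (-2 * br z) (ca z) hε hR0 hst Set.inter_subset_right
        ?_ hs.2 hR'1
      rintro x ⟨hxA, hx⟩
      obtain ⟨-, γ', hγ', hP'⟩ := hAmem x hxA
      have e1 : γ' * γ⁻¹ * (z * uu x) = γ' * g * uu x := by rw [hz]; group
      have hNN : γ' * γ⁻¹ ∈ NN := by
        apply huniq δ hδ hδδ₀ (z * uu x) _ (Γ.mul_mem hγ' (Γ.inv_mem hγ)) (hPx x hx)
        rw [e1]
        exact hmono hP'
      have k1 := (coord_abs hNN (z * uu x)).1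
      rw [e1] at k1
      have := hP'.1
      rwa [k1, hq x] at this

end
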